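/- arXiv:1907.05645 — 6 statements merged into one kernel-verified Lean document; each statement's English description precedes it below -/
import Mathlib

section
/- Let p be a prime, q a power of p, n, ℓ positive integers, and set e = gcd(ℓ(q-1), q^n - 1). Then the set {a ∈ F_{q^n} : a^ℓ ∈ F_q} is equal to the set {a ∈ F_{q^n} : a^{e+1} = a}, i.e. it is exactly the set of roots in F_{q^n} of the polynomial z^{e+1} - z. -/
theorem pow_eq_self_iff_pow_sub_one_eq_one₀ {M : Type*} [MonoidWithZero M] [IsRightCancelMulZero M]
    {a : M} {k : ℕ} (hk : k ≠ 0) (ha : a ≠ 0) : a ^ k = a ↔ a ^ (k - 1) = 1 := by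
  rw [← pow_sub_one_mul hk a, mul_eq_right₀ ha]

theorem pow_gcd_eq_one_iff_of_pow_eq_one {M : Type*} [Monoid M] {a : M} {m n : ℕ}
    (hn : a ^ n = 1) : a ^ m.gcd n = 1 ↔ a ^ m = 1 := by
  simp only [← orderOf_dvd_iff_pow_eq_one, Nat.dvd_gcd_iff, orderOf_dvd_of_pow_eq_one hn, and_true]

theorem stmt_2_general {G₀ : Type*} [GroupWithZero G₀] [Fintype G₀] (ℓ : ℕ) {q : ℕ} (hq : q ≠ 0) :
    {a : G₀ | (a ^ ℓ) ^ q = a ^ ℓ} =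
      {a : G₀ | a ^ ((ℓ * (q - 1)).gcd (Fintype.card G₀ - 1) + 1) = a} := by
  ext a
  rw [Set.mem_ofPred_eq, Set.mem_ofPred_eq]
  obtain rfl | ha := eq_or_ne a 0
  · obtain rfl | hℓ := eq_or_ne ℓ 0 <;> simp [*]
  have pow_card_sub_one : a ^ (Fintype.card G₀ - 1) = 1 :=
    FiniteField.pow_card_sub_one_eq_one a ha
  calc
    (a ^ ℓ) ^ q = a ^ ℓ ↔ a ^ (ℓ * (q - 1)) = 1 := by
      rw [pow_eq_self_iff_pow_sub_one_eq_one₀ hq (pow_ne_zero ℓ ha), pow_mul]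
    _ ↔ a ^ (ℓ * (q - 1)).gcd (Fintype.card G₀ - 1) = 1 :=
      (pow_gcd_eq_one_iff_of_pow_eq_one pow_card_sub_one).symm
    _ ↔ a ^ ((ℓ * (q - 1)).gcd (Fintype.card G₀ - 1) + 1) = a :=
      (pow_eq_self_iff_pow_sub_one_eq_one₀ (Nat.succ_ne_zero _) ha).symm

/-- With `e = gcd(ℓ(q-1), q^n - 1)`, the set of `a ∈ F_{q^n}` with `a ^ ℓ ∈ F_q`
(i.e. `(a ^ ℓ) ^ q = a ^ ℓ`) equals the set of roots of `z ^ (e+1) - z`. -/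
theorem stmt_2 (p q n ℓ e : ℕ) (hp : p.Prime) (hq : ∃ m : ℕ, 0 < m ∧ q = p ^ m)
    (hn : 0 < n) (hℓ : 0 < ℓ) (he : e = Nat.gcd (ℓ * (q - 1)) (q ^ n - 1))
    (F : Type*) [Field F] [Fintype F] (hF : Fintype.card F = q ^ n) :
    {a : F | (a ^ ℓ) ^ q = a ^ ℓ} = {a : F | a ^ (e + 1) = a} := by
  obtain ⟨m, -, rfl⟩ := hq
  rw [he, ← hF, stmt_2_general ℓ (pow_ne_zero m hp.ne_zero)]
end

section
/- Let p be a prime, q a power of p, and ℓ, n positive integers (not both equal to 1) with gcd(p, ℓ) = 1. Then the number of pairs (a, b) ∈ F_{q^n} × F_{q^n} satisfying b^{q^{n-1}} + b^{q^{n-2}} + ... + b^q + b = a^ℓ is exactly q^{n-1} · (gcd(ℓ(q-1), q^n - 1) + 1). -/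
/-!
Let `K` be the subfield of order `q` of `L = F_{q^n}`. The left-hand side of the equation is
`Tr_{L/K}(b)`, and the trace is a nonzero `K`-linear form, so every element of `K` has exactly
`q^{n-1}` preimages. The possible first coordinates are the `a` with `a ^ ℓ ∈ K`, that is
`(a ^ ℓ) ^ q = a ^ ℓ`: these are `0` and the units with `a ^ (ℓ (q - 1)) = 1`, of which the cyclic
group `Lˣ` of order `q^n - 1` has `gcd (ℓ (q - 1), q^n - 1)`.
-/

open Module Polynomial

theorem ncard_eq_ncard_image_fst_mul {α β : Type*} [Finite β] {S : Set (α × β)} {c : ℕ}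
    (hc : ∀ a ∈ Prod.fst '' S, (Prod.mk a ⁻¹' S).ncard = c) :
    S.ncard = (Prod.fst '' S).ncard * c := by
  let sigmaEquiv : S ≃ Σ a : Prod.fst '' S, Prod.mk a.1 ⁻¹' S :=
    { toFun := fun s => ⟨⟨s.1.1, s.1, s.2, rfl⟩, s.1.2, s.2⟩
      invFun := fun t => ⟨(t.1.1, t.2.1), t.2.2⟩ }
  let prodEquiv : S ≃ (Prod.fst '' S) × Fin c :=
    sigmaEquiv.trans (.sigmaEquivProdOfEquiv fun a => Finite.equivFinOfCardEq (hc a.1 a.2))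
  calc S.ncard
      = Nat.card ((Prod.fst '' S) × Fin c) := Nat.card_congr prodEquiv
    _ = (Prod.fst '' S).ncard * c := by rw [Nat.card_prod, Nat.card_fin, Nat.card_coe_set_eq]

theorem ncard_fiber_dual_of_ne_zero {K V : Type*} [Field K] [AddCommGroup V] [Module K V]
    [Module.Finite K V] {f : Dual K V} (hf : f ≠ 0) (c : K) :
    {v | f v = c}.ncard = Nat.card K ^ (finrank K V - 1) := by
  have hsurj : Function.Surjective f := LinearMap.surjective hf
  have hker : finrank K (LinearMap.ker f) = finrank K V - 1 :=
    Nat.eq_sub_of_add_eq (Dual.finrank_ker_add_one_of_ne_zero hf)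
  calc {v | f v = c}.ncard
      = Nat.card (LinearMap.ker f) :=
        Nat.card_congr (f.toAddMonoidHom.fiberEquivKerOfSurjective hsurj c)
    _ = Nat.card K ^ (finrank K V - 1) := by rw [natCard_eq_pow_finrank (K := K), hker]

theorem ncard_setOf_ne_zero_and_pow_eq_one (L : Type*) [Field L] [Finite L] (d : ℕ) :
    {a : L | a ≠ 0 ∧ a ^ d = 1}.ncard = d.gcd (Nat.card L - 1) := by
  have heq : {a : L | a ≠ 0 ∧ a ^ d = 1} =
      Units.val '' ((powMonoidHom d : Lˣ →* Lˣ).ker : Set Lˣ) := by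
    ext a
    constructor
    · rintro ⟨ha, had⟩
      exact ⟨Units.mk0 a ha, Units.ext had, rfl⟩
    · rintro ⟨u, hu, rfl⟩
      exact ⟨u.ne_zero, congrArg Units.val hu⟩
  rw [heq, Set.ncard_image_of_injective _ Units.val_injective, ← Nat.card_coe_set_eq,
    SetLike.coe_sort_coe, IsCyclic.card_powMonoidHom_ker, Nat.card_units, Nat.gcd_comm]

section Extension

variable (K : Type*) {L : Type*} [Field K] [Field L] [Algebra K L]

theorem mem_range_algebraMap_iff_pow_natCard_eq [Finite K] (x : L) :
    x ∈ Set.range (algebraMap K L) ↔ x ^ Nat.card K = x := by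
  constructor
  · rintro ⟨k, rfl⟩
    have := Fintype.ofFinite K
    rw [← map_pow, Nat.card_eq_fintype_card, FiniteField.pow_card]
  · intro hx
    refine (splits_X_pow_nat_card_sub_X (K := K)).mem_range_of_isRoot
      (FiniteField.X_pow_card_sub_X_ne_zero K Finite.one_lt_card) ?_
    simp [hx]

theorem pow_mem_range_algebraMap_iff [Finite K] (ℓ : ℕ) (a : L) :
    a ^ ℓ ∈ Set.range (algebraMap K L) ↔ a = 0 ∨ a ≠ 0 ∧ a ^ (ℓ * (Nat.card K - 1)) = 1 := by
  rcases eq_or_ne a 0 with rfl | ha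
  · exact iff_of_true ⟨0 ^ ℓ, by rw [map_pow, map_zero]⟩ (Or.inl rfl)
  · have hq : Nat.card K - 1 + 1 = Nat.card K := Nat.sub_add_cancel Nat.card_pos
    simp only [ha, false_or, ne_eq, not_false_eq_true, true_and]
    rw [mem_range_algebraMap_iff_pow_natCard_eq, ← hq, pow_succ,
      mul_eq_right₀ (pow_ne_zero ℓ ha), ← pow_mul, Nat.add_sub_cancel]

variable [Finite L]

theorem ncard_setOf_pow_mem_range_algebraMap (ℓ : ℕ) :
    {a : L | a ^ ℓ ∈ Set.range (algebraMap K L)}.ncard =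
      (ℓ * (Nat.card K - 1)).gcd (Nat.card L - 1) + 1 := by
  have : Finite K := .of_injective _ (algebraMap K L).injective
  have heq : {a : L | a ^ ℓ ∈ Set.range (algebraMap K L)} =
      insert 0 {a : L | a ≠ 0 ∧ a ^ (ℓ * (Nat.card K - 1)) = 1} :=
    Set.ext (pow_mem_range_algebraMap_iff K ℓ)
  rw [heq, Set.ncard_insert_of_notMem (fun h => h.1 rfl), ncard_setOf_ne_zero_and_pow_eq_one]

theorem ncard_setOf_algebraMap_trace_eq_pow (ℓ : ℕ) :
    {ab : L × L | algebraMap K L (Algebra.trace K L ab.2) = ab.1 ^ ℓ}.ncard =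
      Nat.card K ^ (finrank K L - 1) * ((ℓ * (Nat.card K - 1)).gcd (Nat.card L - 1) + 1) := by
  set S := {ab : L × L | algebraMap K L (Algebra.trace K L ab.2) = ab.1 ^ ℓ}
  have himage : Prod.fst '' S = {a : L | a ^ ℓ ∈ Set.range (algebraMap K L)} := by
    ext a
    simp [S, (Algebra.trace_surjective K L).exists]
  have hsection : ∀ a ∈ Prod.fst '' S,
      (Prod.mk a ⁻¹' S).ncard = Nat.card K ^ (finrank K L - 1) := by
    rw [himage]
    rintro a ⟨k, hk⟩
    rw [← ncard_fiber_dual_of_ne_zero (Algebra.trace_ne_zero K L) k]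
    congr 1 with b
    simp [S, ← hk]
  rw [ncard_eq_ncard_image_fst_mul hsection, himage, ncard_setOf_pow_mem_range_algebraMap, mul_comm]

end Extension

theorem exists_subfield_natCard_eq {F : Type*} [Field F] [Finite F] {q n : ℕ} (hn : n ≠ 0)
    (hF : Nat.card F = q ^ n) : ∃ K : Subfield F, Nat.card K = q := by
  obtain ⟨p, _⟩ := CharP.exists F
  have : Fact p.Prime := ⟨CharP.char_is_prime F p⟩
  let _ : Algebra (ZMod p) F := ZMod.algebra F p
  have hcard : p ^ finrank (ZMod p) F = q ^ n := (FiniteField.pow_finrank_eq_natCard p F).trans hF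
  obtain ⟨m, -, rfl⟩ : ∃ m ≤ finrank (ZMod p) F, q = p ^ m :=
    (Nat.dvd_prime_pow Fact.out).1 (hcard ▸ dvd_pow_self q hn)
  have hfinrank : finrank (ZMod p) F = m * n :=
    Nat.pow_right_injective (Fact.out : p.Prime).two_le (hcard.trans (pow_mul p m n).symm)
  have hm : m ≠ 0 := by
    rintro rfl
    exact finrank_pos.ne' (hfinrank.trans (zero_mul n))
  obtain ⟨φ⟩ : Nonempty (GaloisField p m →ₐ[ZMod p] F) := by
    refine FiniteField.nonempty_algHom_of_finrank_dvd ?_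
    rw [GaloisField.finrank p hm, hfinrank]
    exact dvd_mul_right m n
  exact ⟨φ.toRingHom.fieldRange,
    (Nat.card_range_of_injective φ.injective).trans (GaloisField.card p m hm)⟩

theorem stmt_3_general (q n ℓ : ℕ) (F : Type*) [Field F] [Finite F] (hF : Nat.card F = q ^ n) :
    Set.ncard {ab : F × F | ∑ i ∈ Finset.range n, ab.2 ^ q ^ i = ab.1 ^ ℓ} =
      q ^ (n - 1) * (Nat.gcd (ℓ * (q - 1)) (q ^ n - 1) + 1) := by
  have hn : n ≠ 0 := by
    rintro rfl
    exact Finite.one_lt_card.ne' hF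
  obtain ⟨K, rfl⟩ := exists_subfield_natCard_eq hn hF
  have hfinrank : finrank K F = n :=
    Nat.pow_right_injective (Finite.one_lt_card (α := K))
      ((natCard_eq_pow_finrank (K := K)).symm.trans hF)
  have htrace (b : F) : ∑ i ∈ Finset.range n, b ^ Nat.card K ^ i =
      algebraMap K F (Algebra.trace K F b) := by
    rw [FiniteField.algebraMap_trace_eq_sum_pow, hfinrank]
  simp only [htrace, ncard_setOf_algebraMap_trace_eq_pow, hfinrank, hF]

/-- The number of `F_{q^n}`-rational affine points of the curve
`A_{n,q,ℓ} : y^{q^{n-1}} + ⋯ + y^q + y = x^ℓ` is `q^{n-1} · (gcd(ℓ(q-1), q^n - 1) + 1)`. -/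
theorem stmt_3 (p q n ℓ : ℕ) (hp : p.Prime) (hq : ∃ m : ℕ, 0 < m ∧ q = p ^ m)
    (hn : 0 < n) (hℓ : 0 < ℓ) (hnot : ¬(ℓ = 1 ∧ n = 1)) (hcop : Nat.Coprime p ℓ)
    (F : Type*) [Field F] [Fintype F] (hF : Fintype.card F = q ^ n) :
    Set.ncard {ab : F × F | ∑ i ∈ Finset.range n, ab.2 ^ q ^ i = ab.1 ^ ℓ} =
      q ^ (n - 1) * (Nat.gcd (ℓ * (q - 1)) (q ^ n - 1) + 1) :=
  stmt_3_general q n ℓ F (Nat.card_eq_fintype_card.trans hF)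
end

section
/- Let q be an odd power of a prime p and k a positive integer with gcd(p, 2k) = 1, and let T(z) = 2·∑_{i=0}^{k-1} z^{q^{k+i}+q^i} + ∑_{i=0}^{2k-1} z^{q^i} ∈ F_q[z]. Then T is separable, i.e. T has no repeated roots in an algebraic closure of F_q (equivalently, T is coprime to its formal derivative). -/
/-! The polynomial `T` is a completed square in disguise: since
`4ab + 2a + 2b + 1 = (2a + 1)(2b + 1)` and `q`-th powers are additive, `2T + k` is the sum over
`i < k` of `(2X + 1) ^ (q ^ (k + i) + q ^ i)`, while `T' = 2X ^ q ^ k + 1 = (2X + 1) ^ q ^ k`.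
So `T'` divides `2T + k`, and a common factor of `T` and `T'` divides the unit `k`. -/

open Polynomial

section CommRing

variable {R : Type*} [CommRing R]

variable (R) in
/-- The polynomial `Tr_n(H_k)`, `n = 2k`, which represents `a ↦ Tr(a ^ (q ^ k + 1) + a)` from
`F_{q^{2k}}` to `F_q`. The exponents are reduced modulo `X ^ q ^ (2 * k) - X`: the conjugates of
`a ^ (q ^ k + 1)` of index `i` and `k + i` are equal, which gives the coefficient `2`. -/
noncomputable def hermitianTrace (q k : ℕ) : R[X] :=
  C 2 * (∑ i ∈ Finset.range k, X ^ (q ^ (k + i) + q ^ i)) + ∑ i ∈ Finset.range (2 * k), X ^ q ^ i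

theorem derivative_X_pow_pow_of_pos {q i : ℕ} (hq : (q : R) = 0) (hi : 0 < i) :
    derivative (X ^ q ^ i : R[X]) = 0 := by
  rw [derivative_X_pow, Nat.cast_pow, hq, zero_pow hi.ne', C_0, zero_mul]

theorem derivative_sum_X_pow_pow {q n : ℕ} (hq : (q : R) = 0) (hn : 0 < n) :
    derivative (∑ i ∈ Finset.range n, X ^ q ^ i : R[X]) = 1 := by
  rw [derivative_sum, Finset.sum_eq_single_of_mem 0 (Finset.mem_range.2 hn)
    fun i _ hi ↦ derivative_X_pow_pow_of_pos hq (Nat.pos_of_ne_zero hi)]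
  rw [pow_zero, pow_one, derivative_X]

theorem derivative_sum_X_pow_pow_add_pow {q k : ℕ} (hq : (q : R) = 0) (hk : 0 < k) :
    derivative (∑ i ∈ Finset.range k, X ^ (q ^ (k + i) + q ^ i) : R[X]) = X ^ q ^ k := by
  have hterm (i : ℕ) : derivative (X ^ (q ^ (k + i) + q ^ i) : R[X]) =
      X ^ q ^ (k + i) * derivative (X ^ q ^ i) := by
    rw [pow_add, derivative_mul, derivative_X_pow_pow_of_pos hq (by lia), zero_mul, zero_add]
  rw [derivative_sum, Finset.sum_eq_single_of_mem 0 (Finset.mem_range.2 hk) fun i _ hi ↦ by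
    rw [hterm, derivative_X_pow_pow_of_pos hq (Nat.pos_of_ne_zero hi), mul_zero]]
  rw [hterm, pow_zero, pow_one, derivative_X, mul_one, add_zero]

theorem derivative_hermitianTrace {q k : ℕ} (hq : (q : R) = 0) (hk : 0 < k) :
    derivative (hermitianTrace R q k) = 2 * X ^ q ^ k + 1 := by
  rw [hermitianTrace, derivative_add, derivative_C_mul, derivative_sum_X_pow_pow_add_pow hq hk,
    derivative_sum_X_pow_pow hq (by lia), C_ofNat]

theorem two_mul_add_one_pow_char_pow (p m : ℕ) [ExpChar R p] (a : R) :
    (2 * a + 1) ^ p ^ m = 2 * a ^ p ^ m + 1 := by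
  simp only [← iterateFrobenius_def, map_add, map_mul, map_ofNat, map_one]

theorem two_mul_hermitianTrace_add_natCast (p m k : ℕ) [ExpChar R p] :
    2 * hermitianTrace R (p ^ m) k + (k : R[X]) =
      ∑ i ∈ Finset.range k, (2 * X + 1) ^ ((p ^ m) ^ (k + i) + (p ^ m) ^ i) := by
  have hterm (i : ℕ) : (2 * X + 1 : R[X]) ^ ((p ^ m) ^ (k + i) + (p ^ m) ^ i) =
      4 * X ^ ((p ^ m) ^ (k + i) + (p ^ m) ^ i) +
        2 * (X ^ (p ^ m) ^ i + X ^ (p ^ m) ^ (k + i)) + 1 := by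
    simp only [pow_add (2 * X + 1 : R[X]), pow_add (X : R[X]), ← pow_mul p,
      two_mul_add_one_pow_char_pow]
    ring
  simp only [hterm, hermitianTrace, two_mul k, Finset.sum_range_add, Finset.sum_add_distrib,
    ← Finset.mul_sum, Finset.sum_const, Finset.card_range, nsmul_one, C_ofNat]
  ring

theorem derivative_hermitianTrace_dvd_two_mul_add {p m k : ℕ} [Fact p.Prime] [CharP R p]
    (hm : m ≠ 0) (hk : 0 < k) :
    derivative (hermitianTrace R (p ^ m) k) ∣ 2 * hermitianTrace R (p ^ m) k + k := by
  have hq : ((p ^ m : ℕ) : R) = 0 := by rw [Nat.cast_pow, CharP.cast_eq_zero, zero_pow hm]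
  have hderiv : derivative (hermitianTrace R (p ^ m) k) = (2 * X + 1) ^ (p ^ m) ^ k := by
    rw [derivative_hermitianTrace hq hk, ← pow_mul, two_mul_add_one_pow_char_pow]
  rw [hderiv, two_mul_hermitianTrace_add_natCast]
  refine Finset.dvd_sum fun i _ ↦ pow_dvd_pow _ ?_
  exact le_add_right (Nat.pow_le_pow_right (pow_pos (Fact.out : p.Prime).pos m) (by lia))

theorem stmt_9_general {p m k : ℕ} [Fact p.Prime] [CharP R p] (hm : m ≠ 0)
    (hcop : p.Coprime k) : (hermitianTrace R (p ^ m) k).Separable := by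
  have hp : p.Prime := Fact.out
  have hpk : ¬ p ∣ k := hp.coprime_iff_not_dvd.1 hcop
  have hk : 0 < k := Nat.pos_of_ne_zero fun h ↦ hpk (h ▸ dvd_zero p)
  have hunit : IsUnit (k : R[X]) := (CharP.isUnit_natCast_iff hp).2 hpk
  have hcoprime : IsCoprime (hermitianTrace R (p ^ m) k) k :=
    isCoprime_one_right.of_isCoprime_of_dvd_right hunit.dvd
  exact (hcoprime.mul_add_right_right 2).of_isCoprime_of_dvd_right
    (derivative_hermitianTrace_dvd_two_mul_add hm hk)

end CommRing

/-- For `q` an odd power of a prime `p`, `k ≥ 1` with `gcd(p, 2k) = 1`, the polynomial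
`T(z) = 2·∑_{i=0}^{k-1} z^{q^{k+i}+q^i} + ∑_{i=0}^{2k-1} z^{q^i}` over `K = F_q` is
separable. -/
theorem stmt_9 (p q k : ℕ) (hp : p.Prime) (hq : ∃ m : ℕ, 0 < m ∧ q = p ^ m)
    (hodd : Odd q) (hk : 0 < k) (hcop : Nat.Coprime p (2 * k))
    (K : Type*) [Field K] [Fintype K] (hK : Fintype.card K = q)
    (T : Polynomial K)
    (hT : T = Polynomial.C 2 *
        (∑ i ∈ Finset.range k, Polynomial.X ^ (q ^ (k + i) + q ^ i)) +
        ∑ i ∈ Finset.range (2 * k), Polynomial.X ^ q ^ i) :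
    T.Separable := by
  have : Fact p.Prime := ⟨hp⟩
  obtain ⟨m, hm, rfl⟩ := hq
  have : CharP K p := charP_of_card_eq_prime_pow hK
  exact hT ▸ stmt_9_general hm.ne' hcop.coprime_mul_left_right
end

section
/- Let q be an odd power of a prime p and k a positive integer with gcd(p, 2k) = 1, and set n = 2k. Then the number of pairs (a, b) ∈ F_{q^n} × F_{q^n} satisfying b^q - b = a^{q^k+1} + a is exactly q^n + q^k. -/
/-!
Write `Q = q ^ k`, let `σ` be the `q`-power map and `τ = σ^[k]`, an involution since `|F| = Q ^ 2`.
With `A = a + 1/2` and `B = b + (a + σ a + ⋯ + σ^[k - 1] a) / 2` the curve becomes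
`A ^ (Q + 1) = σ B - B + 1/4`, because `σ - 1` telescopes the sum to `τ a - a` and
`A ^ (Q + 1) = A * τ A`. The left side is fixed by `τ`, and this forces `τ B = B`. Each of the `Q`
values of `B` fixed by `τ` makes the right side a nonzero element fixed by `τ` (were it zero,
iterating `σ B = B - 1/4` would give `B = τ B = B - k/4`), and such an element equals
`A ^ (Q + 1)` for exactly `Q + 1` values of `A`.
-/

section Counting

theorem ncard_preimage_singleton_map {G H : Type*} [Group G] [Group H] (f : G →* H) (g : G) :
    (f ⁻¹' {f g}).ncard = Nat.card f.ker := by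
  have hcoset : f ⁻¹' {f g} = (g * ·) '' (f.ker : Set G) := by
    ext x
    simp [MonoidHom.mem_ker, eq_comm, eq_inv_mul_iff_mul_eq]
  rw [hcoset, Set.ncard_image_of_injective _ (mul_right_injective g), ← Nat.card_coe_set_eq]
  rfl

theorem range_powMonoidHom_eq_ker {G : Type*} [CommGroup G] [IsCyclic G] [Finite G] {d e : ℕ}
    (hG : Nat.card G = d * e) :
    (powMonoidHom d : G →* G).range = (powMonoidHom e : G →* G).ker := by
  have hd : 0 < d := Nat.pos_of_mul_pos_right (hG ▸ Nat.card_pos)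
  apply Subgroup.eq_of_le_of_card_ge
  · rintro _ ⟨a, rfl⟩
    simp [MonoidHom.mem_ker, ← pow_mul, ← hG]
  · rw [IsCyclic.card_powMonoidHom_range, IsCyclic.card_powMonoidHom_ker, hG,
      Nat.gcd_mul_left_left, Nat.gcd_mul_right_left, Nat.mul_div_cancel_left e hd]

theorem ncard_setOf_pow_eq_of_isCyclic {G : Type*} [CommGroup G] [IsCyclic G] [Finite G] {d e : ℕ}
    (hG : Nat.card G = d * e) {c : G} (hc : c ^ e = 1) : {a : G | a ^ d = c}.ncard = d := by
  obtain ⟨g, rfl⟩ : c ∈ (powMonoidHom d : G →* G).range := by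
    simpa [range_powMonoidHom_eq_ker hG, MonoidHom.mem_ker] using hc
  have hker : Nat.card (powMonoidHom d : G →* G).ker = d := by
    rw [IsCyclic.card_powMonoidHom_ker, hG, Nat.gcd_mul_right_left]
  exact (ncard_preimage_singleton_map (powMonoidHom d : G →* G) g).trans hker

theorem ncard_setOf_mem_and_mem_of_ncard_eq {α β : Type*} [Finite α] [Finite β]
    (t : Set β) (s : β → Set α) {m : ℕ} (hs : ∀ b ∈ t, (s b).ncard = m) :
    {x : α × β | x.2 ∈ t ∧ x.1 ∈ s x.2}.ncard = t.ncard * m := by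
  have : Fintype t := Fintype.ofFinite t
  let e : {x : α × β | x.2 ∈ t ∧ x.1 ∈ s x.2} ≃ Σ b : t, s b :=
    { toFun x := ⟨⟨x.1.2, x.2.1⟩, x.1.1, x.2.2⟩
      invFun y := ⟨(y.2, y.1), y.1.2, y.2.2⟩ }
  calc {x : α × β | x.2 ∈ t ∧ x.1 ∈ s x.2}.ncard
    _ = ∑ b : t, (s b).ncard := by
      simp only [← Nat.card_coe_set_eq, Nat.card_congr e, Nat.card_sigma]
    _ = ∑ _b : t, m := Finset.sum_congr rfl fun b _ ↦ hs b b.2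
    _ = t.ncard * m := by
      rw [Finset.sum_const, Finset.card_univ, ← Nat.card_eq_fintype_card, Nat.card_coe_set_eq,
        smul_eq_mul]

variable {F : Type*} [Field F] [Finite F]

theorem ncard_setOf_pow_eq {d e : ℕ} (hF : Nat.card F = d * e + 1) {c : F} (hc₀ : c ≠ 0)
    (hc : c ^ e = 1) : {a : F | a ^ d = c}.ncard = d := by
  have hunits : Nat.card Fˣ = d * e := by rw [Nat.card_units, hF, Nat.add_sub_cancel]
  have hd : d ≠ 0 := left_ne_zero_of_mul (hunits ▸ Nat.card_pos.ne')
  have hrange : {a : F | a ^ d = c} ⊆ Set.range ((↑) : Fˣ → F) := fun a ha ↦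
    ⟨Units.mk0 a (by rintro rfl; exact hc₀ (by simpa [hd] using ha.symm)), rfl⟩
  rw [← Set.ncard_preimage_of_injective_subset_range Units.val_injective hrange]
  convert ncard_setOf_pow_eq_of_isCyclic hunits (c := Units.mk0 c hc₀) (by ext; simpa using hc)
  simp [Units.ext_iff]

theorem ncard_setOf_pow_succ_eq_self {d e : ℕ} (hF : Nat.card F = d * e + 1) :
    {b : F | b ^ (d + 1) = b}.ncard = d + 1 := by
  have hd : d ≠ 0 := by
    rintro rfl
    simpa [hF] using Finite.one_lt_card (α := F)
  have hinsert : {b : F | b ^ (d + 1) = b} = insert 0 {b : F | b ^ d = 1} := by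
    ext b
    rcases eq_or_ne b 0 with rfl | hb <;> simp [pow_succ, *]
  rw [hinsert, Set.ncard_insert_of_notMem (by simp [hd]),
    ncard_setOf_pow_eq hF one_ne_zero (one_pow e)]

theorem ncard_setOf_pow_eq_self_of_card_eq_sq {Q : ℕ} (hF : Nat.card F = Q ^ 2) :
    {b : F | b ^ Q = b}.ncard = Q := by
  obtain _ | d := Q
  · exact absurd hF Nat.card_pos.ne'
  · exact ncard_setOf_pow_succ_eq_self (e := d + 2) (by rw [hF]; ring)

theorem ncard_setOf_pow_succ_eq_of_card_eq_sq {Q : ℕ} (hF : Nat.card F = Q ^ 2) {c : F}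
    (hc₀ : c ≠ 0) (hc : c ^ Q = c) : {a : F | a ^ (Q + 1) = c}.ncard = Q + 1 := by
  obtain _ | d := Q
  · exact absurd hF Nat.card_pos.ne'
  · exact ncard_setOf_pow_eq (e := d) (by rw [hF]; ring) hc₀
      (mul_right_cancel₀ hc₀ (by rw [← pow_succ, hc, one_mul]))

end Counting

section IterateAdditive

theorem iterate_eq_add_nsmul {M E : Type*} [AddMonoid M] [FunLike E M M] [AddMonoidHomClass E M M]
    {f : E} {x c : M} (hx : f x = x + c) (hc : f c = c) (k : ℕ) : f^[k] x = x + k • c := by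
  induction k with
  | zero => simp
  | succ k ih => rw [Function.iterate_succ_apply', ih, map_add, map_nsmul, hx, hc, add_assoc,
      ← succ_nsmul']

variable {G E : Type*} [AddCommGroup G] [FunLike E G G] [AddMonoidHomClass E G G]

theorem map_birkhoffSum_id_sub (f : E) (k : ℕ) (x : G) :
    f (birkhoffSum f id k x) - birkhoffSum f id k x = f^[k] x - x := by
  have hcomm : f (birkhoffSum f id k x) = birkhoffSum f id k (f x) := by
    simp [birkhoffSum, map_sum, ← Function.iterate_succ_apply, Function.iterate_succ_apply']
  rw [hcomm, birkhoffSum_apply_sub_birkhoffSum, id, id]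

variable {f : E} {k : ℕ}

theorem map_sub_add_ne_zero {x c : G} (hx : f^[k] x = x) (hc : f c = c) (hkc : k • c ≠ 0) :
    f x - x + c ≠ 0 := by
  intro h
  have hstep : f x = x + -c := by rw [← add_eq_zero_iff_eq_neg.mp h, add_sub_cancel]
  have hiter := iterate_eq_add_nsmul hstep (by rw [map_neg, hc]) k
  rw [hx, left_eq_add, smul_neg, neg_eq_zero] at hiter
  exact hkc hiter

theorem iterate_map_sub_self (x : G) : f^[k] (f x - x) = f (f^[k] x) - f^[k] x := by
  rw [iterate_map_sub, ← Function.iterate_succ_apply, Function.iterate_succ_apply']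

theorem iterate_eq_self_of_iterate_map_sub (h2 : ∀ y : G, -y = y → y = 0)
    (hinv : Function.Involutive f^[k]) {x : G} (hx : f^[k] (f x - x) = f x - x) :
    f^[k] x = x := by
  have hfix : f (f^[k] x - x) = f^[k] x - x := by
    rw [map_sub, sub_eq_sub_iff_sub_eq_sub, ← iterate_map_sub_self, hx]
  have hneg : f^[k] (f^[k] x - x) = -(f^[k] x - x) := by
    rw [iterate_map_sub, hinv x, neg_sub]
  exact sub_eq_zero.mp (h2 _ (hneg.symm.trans (Function.iterate_fixed hfix k)))

end IterateAdditive

section TwistedCurve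

variable {F : Type*} [Field F] (σ : F →+* F) (k : ℕ)

/-- The change of variables `(a, b) ↦ (a + 1/2, b + (a + σ a + ⋯ + σ^[k - 1] a) / 2)`, which
completes the norm form in `σ b - b = a * σ^[k] a + a`. -/
noncomputable def completeNormEquiv : F × F ≃ F × F :=
  (Equiv.addRight 2⁻¹).prodShear fun a ↦ Equiv.addRight (birkhoffSum σ id k a / 2)

theorem map_sub_eq_mul_add_iff_completeNormEquiv (h2 : (2 : F) ≠ 0) (x : F × F) :
    σ x.2 - x.2 = x.1 * σ^[k] x.1 + x.1 ↔
      (completeNormEquiv σ k x).1 * σ^[k] (completeNormEquiv σ k x).1 =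
        σ (completeNormEquiv σ k x).2 - (completeNormEquiv σ k x).2 + 4⁻¹ := by
  obtain ⟨a, b⟩ := x
  have htele := map_birkhoffSum_id_sub σ k a
  have hhalf : σ 2⁻¹ = 2⁻¹ := by rw [map_inv₀, map_ofNat]
  have hτ : σ^[k] (a + 2⁻¹) = σ^[k] a + 2⁻¹ := by
    rw [iterate_map_add, Function.iterate_fixed hhalf]
  have h4 : (4 : F)⁻¹ = 2⁻¹ * 2⁻¹ := by rw [← mul_inv]; norm_num
  have h22 : (2⁻¹ : F) * 2 = 1 := inv_mul_cancel₀ h2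
  simp only [completeNormEquiv, Equiv.prodShear_apply, Equiv.coe_addRight, hτ, map_add, map_mul,
    hhalf, div_eq_mul_inv, h4]
  constructor <;> intro h
  · linear_combination -h - 2⁻¹ * htele + a * h22
  · linear_combination -h - 2⁻¹ * htele + a * h22

variable {σ k}

theorem iterate_eq_self_of_mul_iterate_eq (h2 : (2 : F) ≠ 0) (hinv : Function.Involutive σ^[k])
    {a b c : F} (hc : σ^[k] c = c) (h : a * σ^[k] a = σ b - b + c) : σ^[k] b = b := by
  refine iterate_eq_self_of_iterate_map_sub (fun y hy ↦ ?_) hinv ?_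
  · exact (mul_eq_zero.mp (by linear_combination -hy : 2 * y = 0)).resolve_left h2
  · rw [← sub_eq_iff_eq_add.mpr h, iterate_map_sub, iterate_map_mul, hinv, hc, mul_comm]

variable [Finite F] {Q : ℕ}

theorem ncard_setOf_pow_succ_eq_map_sub_add (hσ : ∀ x, σ^[k] x = x ^ Q)
    (hF : Nat.card F = Q ^ 2) (h2 : (2 : F) ≠ 0) {c : F} (hc : σ c = c) (hkc : k • c ≠ 0) :
    {x : F × F | x.1 ^ (Q + 1) = σ x.2 - x.2 + c}.ncard = Q * (Q + 1) := by
  have hτc : σ^[k] c = c := Function.iterate_fixed hc k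
  have hinv : Function.Involutive σ^[k] := fun x ↦ by
    have := Fintype.ofFinite F
    rw [hσ, hσ, ← pow_mul, ← sq, ← hF, Nat.card_eq_fintype_card, FiniteField.pow_card]
  have hfixed {a b : F} (h : a ^ (Q + 1) = σ b - b + c) : b ^ Q = b := by
    rw [pow_succ', ← hσ] at h
    rw [← hσ, iterate_eq_self_of_mul_iterate_eq h2 hinv hτc h]
  have hfiber (b : F) (hb : b ^ Q = b) :
      {a : F | a ^ (Q + 1) = σ b - b + c}.ncard = Q + 1 := by
    rw [← hσ] at hb
    refine ncard_setOf_pow_succ_eq_of_card_eq_sq hF (map_sub_add_ne_zero hb hc hkc) ?_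
    rw [← hσ, iterate_map_add, iterate_map_sub_self, hb, hτc]
  calc {x : F × F | x.1 ^ (Q + 1) = σ x.2 - x.2 + c}.ncard
    _ = {x : F × F | x.2 ^ Q = x.2 ∧ x.1 ^ (Q + 1) = σ x.2 - x.2 + c}.ncard := by
      congr 1
      ext x
      exact ⟨fun h ↦ ⟨hfixed h, h⟩, And.right⟩
    _ = {b : F | b ^ Q = b}.ncard * (Q + 1) := ncard_setOf_mem_and_mem_of_ncard_eq _ _ hfiber
    _ = Q * (Q + 1) := by rw [ncard_setOf_pow_eq_self_of_card_eq_sq hF]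

theorem ncard_setOf_map_sub_eq_pow_succ_add (hσ : ∀ x, σ^[k] x = x ^ Q)
    (hF : Nat.card F = Q ^ 2) (h2k : ((2 * k : ℕ) : F) ≠ 0) :
    {x : F × F | σ x.2 - x.2 = x.1 ^ (Q + 1) + x.1}.ncard = Q * (Q + 1) := by
  obtain ⟨h2, hk⟩ : (2 : F) ≠ 0 ∧ (k : F) ≠ 0 := by
    rwa [Nat.cast_mul, Nat.cast_ofNat, mul_ne_zero_iff] at h2k
  have h4 : (4 : F) ≠ 0 := by
    rw [show (4 : F) = 2 * 2 by norm_num]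
    exact mul_ne_zero h2 h2
  have hk4 : k • (4 : F)⁻¹ ≠ 0 := by
    rw [nsmul_eq_mul]
    exact mul_ne_zero hk (inv_ne_zero h4)
  have hpre : {x : F × F | σ x.2 - x.2 = x.1 ^ (Q + 1) + x.1} =
      completeNormEquiv σ k ⁻¹' {x | x.1 ^ (Q + 1) = σ x.2 - x.2 + 4⁻¹} := by
    ext x
    simpa only [hσ, ← pow_succ'] using! map_sub_eq_mul_add_iff_completeNormEquiv σ k h2 x
  rw [hpre, Set.ncard_preimage_of_injective_subset_range (Equiv.injective _) (by simp)]
  exact ncard_setOf_pow_succ_eq_map_sub_add hσ hF h2 (by rw [map_inv₀, map_ofNat]) hk4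

end TwistedCurve

/-- For `q` an odd power of a prime `p`, `k ≥ 1` with `gcd(p, 2k) = 1`, and `n = 2k`,
the number of pairs `(a, b) ∈ F_{q^n} × F_{q^n}` with `b^q - b = a^{q^k+1} + a` is
exactly `q^n + q^k`. -/
theorem stmt_11 (p q k : ℕ) (hp : p.Prime) (hq : ∃ m : ℕ, 0 < m ∧ q = p ^ m)
    (hodd : Odd q) (hk : 0 < k) (hcop : Nat.Coprime p (2 * k))
    (F : Type*) [Field F] [Fintype F] (hF : Fintype.card F = q ^ (2 * k)) :
    Set.ncard {ab : F × F | ab.2 ^ q - ab.2 = ab.1 ^ (q ^ k + 1) + ab.1} =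
      q ^ (2 * k) + q ^ k := by
  obtain ⟨m, -, rfl⟩ := hq
  have : Fact p.Prime := ⟨hp⟩
  have : CharP F p := charP_of_card_eq_prime_pow (f := m * (2 * k)) (by rw [hF, ← pow_mul])
  have hσ (x : F) : (iterateFrobenius F p m)^[k] x = x ^ (p ^ m) ^ k := by
    rw [← coe_iterateFrobenius_mul, iterateFrobenius_def, pow_mul]
  have hcard : Nat.card F = ((p ^ m) ^ k) ^ 2 := by
    rw [Nat.card_eq_fintype_card, hF, mul_comm, pow_mul]
  have h2k : ((2 * k : ℕ) : F) ≠ 0 := by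
    rwa [Ne, CharP.cast_eq_zero_iff F p, ← hp.coprime_iff_not_dvd]
  refine (ncard_setOf_map_sub_eq_pow_succ_add hσ hcard h2k).trans ?_
  ring
end

section
/- Let p be a prime, q an odd power of p, and ℓ a positive integer with gcd(p, ℓ) = 1 such that 2·gcd(ℓ, q+1) divides q+1. Then the number of pairs (a, b) ∈ F_{q^2} × F_{q^2} satisfying b^q - b = a^ℓ is exactly q · (gcd(ℓ(q-1), q^2 - 1) + 1). -/
/-!
Let `σ x = x ^ q`, an involution of the field `F` with `q ^ 2` elements. Projecting the solutions of
`σ b - b = a ^ ℓ` to `a`, every nonempty fibre is a coset of the fixed points of `σ`, which are `0`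
and the `(q - 1)`-th roots of unity. As `q` is odd, halving shows that `c` has the form `σ b - b`
exactly when `σ c = -c`. For `c = a ^ ℓ` with `a ≠ 0` this says `a ^ (ℓ * (q - 1)) = -1`, and in the
cyclic group `Fˣ` the element `-1` is an `n`-th power as soon as `|Fˣ| / gcd(|Fˣ|, n)` is even.
-/

section CyclicGroup

variable {G : Type*} [CommGroup G] [IsCyclic G] [Finite G]

lemma range_powMonoidHom_eq_ker_of_isCyclic (n : ℕ) :
    (powMonoidHom n : G →* G).range =
      (powMonoidHom (Nat.card G / (Nat.card G).gcd n) : G →* G).ker := by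
  have hgcd : (Nat.card G).gcd n ∣ Nat.card G := Nat.gcd_dvd_left ..
  refine Subgroup.eq_of_le_of_card_ge ?_ ?_
  · rintro _ ⟨u, rfl⟩
    obtain ⟨k, hk⟩ : Nat.card G ∣ n * (Nat.card G / (Nat.card G).gcd n) := by
      rw [← Nat.mul_div_assoc _ hgcd, mul_comm, Nat.mul_div_assoc _ (Nat.gcd_dvd_right ..)]
      exact dvd_mul_right ..
    rw [MonoidHom.mem_ker, powMonoidHom_apply, powMonoidHom_apply, ← pow_mul, hk, pow_mul,
      pow_card_eq_one', one_pow]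
  · rw [IsCyclic.card_powMonoidHom_ker, IsCyclic.card_powMonoidHom_range,
      Nat.gcd_eq_right (Nat.div_dvd_of_dvd hgcd)]

lemma ncard_setOf_pow_eq_of_isCyclic_s14 {n : ℕ} {x : G}
    (hx : x ^ (Nat.card G / (Nat.card G).gcd n) = 1) :
    {u : G | u ^ n = x}.ncard = (Nat.card G).gcd n := by
  obtain ⟨v, rfl⟩ : x ∈ (powMonoidHom n : G →* G).range := by
    rwa [range_powMonoidHom_eq_ker_of_isCyclic]
  rw [← IsCyclic.card_powMonoidHom_ker]
  exact Nat.card_congr ((powMonoidHom n).fiberEquivKer v)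

end CyclicGroup

lemma ncard_setOf_pow_add_eq_mul_pow {M₀ : Type*} [GroupWithZero M₀] [Finite M₀] (c : M₀ˣ)
    (n : ℕ) {m : ℕ} (hm : m ≠ 0) :
    {a : M₀ | a ^ (n + m) = c * a ^ m}.ncard = {u : M₀ˣ | u ^ n = c}.ncard + 1 := by
  have hset : {a : M₀ | a ^ (n + m) = c * a ^ m} =
      insert 0 (Units.val '' {u : M₀ˣ | u ^ n = c}) := by
    ext a
    obtain rfl | ha := eq_or_ne a 0
    · simp [hm]
    · lift a to M₀ˣ using ha.isUnit
      simp [pow_add, ← Units.val_pow_eq_pow_val, Units.val_inj]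
  rw [hset, Set.ncard_insert_of_notMem (by simp),
    Set.ncard_image_of_injective _ Units.val_injective]

lemma ncard_setOf_map_snd_eq {α A B : Type*} [AddGroup A] [AddGroup B] (f : A →+ B)
    (g : α → B) :
    {x : α × A | f x.2 = g x.1}.ncard = {a | g a ∈ f.range}.ncard * Nat.card f.ker := by
  choose s hs using fun a : {a | g a ∈ f.range} ↦ a.2
  let e : {x : α × A | f x.2 = g x.1} ≃ {a | g a ∈ f.range} × f.ker :=
    { toFun x := (⟨x.1.1, x.1.2, x.2⟩, ⟨-s ⟨x.1.1, x.1.2, x.2⟩ + x.1.2, by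
        rw [f.mem_ker, map_add, map_neg, hs, x.2.out, neg_add_cancel]⟩)
      invFun y := ⟨(y.1, s y.1 + y.2), by
        rw [Set.mem_ofPred_eq, map_add, hs, f.mem_ker.1 y.2.2, add_zero]⟩
      left_inv x := Subtype.ext (Prod.ext rfl (add_neg_cancel_left ..))
      right_inv y := Prod.ext rfl (Subtype.ext (neg_add_cancel_left ..)) }
  exact (Nat.card_congr e).trans (Nat.card_prod ..)

lemma mem_range_sub_id_iff_eq_neg {K : Type*} [DivisionRing K] [NeZero (2 : K)] {σ : K →+* K}
    (hσ : Function.Involutive σ) {c : K} :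
    c ∈ (σ - AddMonoidHom.id K : K →+ K).range ↔ σ c = -c := by
  constructor
  · rintro ⟨b, rfl⟩
    simp [hσ b]
  · intro hc
    exact ⟨-(c / 2), by simp [hc, neg_div, map_ofNat σ 2]⟩

section FiniteField

variable {F : Type*} [Field F] [Finite F] {q : ℕ}

lemma exists_ringHom_eq_pow_of_card_eq_pow {n : ℕ} (hF : Nat.card F = q ^ n) :
    ∃ σ : F →+* F, ∀ x, σ x = x ^ q := by
  have := Fintype.ofFinite F
  have hn : n ≠ 0 := by
    rintro rfl
    exact Finite.one_lt_card.ne' hF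
  obtain ⟨p, _, k, hp, hcard⟩ := FiniteField.card' F
  have := Fact.mk hp
  obtain ⟨m, -, rfl⟩ : ∃ m ≤ (k : ℕ), q = p ^ m := by
    rw [← Nat.dvd_prime_pow hp, ← hcard, ← Nat.card_eq_fintype_card, hF]
    exact dvd_pow_self q hn
  exact ⟨iterateFrobenius F p m, iterateFrobenius_def p m⟩

lemma pow_pow_eq_self_of_card_eq_sq (hF : Nat.card F = q ^ 2) (x : F) : (x ^ q) ^ q = x := by
  have := Fintype.ofFinite F
  rw [← pow_mul, ← sq, ← hF, Nat.card_eq_fintype_card, FiniteField.pow_card]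

lemma two_ne_zero_of_odd_card (hF : Odd (Nat.card F)) : (2 : F) ≠ 0 := by
  have := Fintype.ofFinite F
  refine Ring.two_ne_zero fun hchar ↦ Nat.not_even_iff_odd.2 hF ?_
  rw [Nat.even_iff, Nat.card_eq_fintype_card, FiniteField.even_card_of_char_two hchar]

lemma ncard_setOf_pow_eq_self_of_card_eq_pow {n : ℕ} (hq : q ≠ 0) (hF : Nat.card F = q ^ n) :
    {b : F | b ^ q = b}.ncard = q := by
  have hdvd : q - 1 ∣ Nat.card F - 1 := hF ▸ Nat.sub_one_dvd_pow_sub_one q n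
  have h := ncard_setOf_pow_add_eq_mul_pow (1 : Fˣ) (q - 1) one_ne_zero
  rw [ncard_setOf_pow_eq_of_isCyclic_s14 (one_pow _), Nat.card_units, Nat.gcd_eq_right hdvd,
    Nat.sub_one_add_one hq] at h
  simpa using h

lemma ncard_setOf_pow_add_eq_neg_pow {n m : ℕ} (hm : m ≠ 0)
    (hdvd : 2 * (Nat.card F - 1).gcd n ∣ Nat.card F - 1) :
    {a : F | a ^ (n + m) = -a ^ m}.ncard = (Nat.card F - 1).gcd n + 1 := by
  have hroot : (-1 : Fˣ) ^ (Nat.card Fˣ / (Nat.card Fˣ).gcd n) = 1 := by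
    rw [Nat.card_units]
    exact (even_iff_two_dvd.2 (Nat.dvd_div_of_mul_dvd (by rwa [mul_comm]))).neg_one_pow
  have h := ncard_setOf_pow_add_eq_mul_pow (-1 : Fˣ) n hm
  rw [ncard_setOf_pow_eq_of_isCyclic_s14 hroot, Nat.card_units] at h
  simpa using h

lemma ncard_setOf_pow_pow_eq_neg_pow {ℓ : ℕ} (hq : q ≠ 0) (hF : Nat.card F = q ^ 2)
    (hdvd : 2 * Nat.gcd ℓ (q + 1) ∣ q + 1) :
    {a : F | (a ^ ℓ) ^ q = -a ^ ℓ}.ncard = Nat.gcd (ℓ * (q - 1)) (q ^ 2 - 1) + 1 := by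
  have hℓ : ℓ ≠ 0 := by
    rintro rfl
    have := Nat.le_of_dvd q.succ_pos hdvd
    simp at this
  have hcard : q ^ 2 - 1 = (q + 1) * (q - 1) := by simpa using Nat.sq_sub_sq q 1
  have hexp : ℓ * q = ℓ * (q - 1) + ℓ := by rw [← Nat.mul_add_one, Nat.sub_one_add_one hq]
  have hdvd' : 2 * (Nat.card F - 1).gcd (ℓ * (q - 1)) ∣ Nat.card F - 1 := by
    rw [hF, hcard, Nat.gcd_mul_right, Nat.gcd_comm, ← mul_assoc]
    exact Nat.mul_dvd_mul_right hdvd _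
  simp only [← pow_mul, hexp]
  rw [ncard_setOf_pow_add_eq_neg_pow hℓ hdvd', hF, Nat.gcd_comm]

end FiniteField

theorem stmt_14_general {F : Type*} [Field F] [Finite F] {q ℓ : ℕ} (hF : Nat.card F = q ^ 2)
    (hdvd : 2 * Nat.gcd ℓ (q + 1) ∣ q + 1) :
    {ab : F × F | ab.2 ^ q - ab.2 = ab.1 ^ ℓ}.ncard =
      q * (Nat.gcd (ℓ * (q - 1)) (q ^ 2 - 1) + 1) := by
  have hodd : Odd q := by
    have : 2 ∣ q + 1 := dvd_of_mul_right_dvd hdvd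
    grind
  have : NeZero (2 : F) := ⟨two_ne_zero_of_odd_card (hF ▸ hodd.pow)⟩
  obtain ⟨σ, hσ⟩ := exists_ringHom_eq_pow_of_card_eq_pow hF
  have hinv : Function.Involutive σ := fun x ↦ by
    rw [hσ, hσ, pow_pow_eq_self_of_card_eq_sq hF]
  let f : F →+ F := σ - AddMonoidHom.id F
  have hf (b : F) : f b = b ^ q - b := by simp [f, hσ]
  have hker : Nat.card f.ker = q := by
    rw [← ncard_setOf_pow_eq_self_of_card_eq_pow hodd.pos.ne' hF]
    exact Nat.card_congr (Equiv.setCongr (by ext; simp [AddMonoidHom.mem_ker, hf, sub_eq_zero]))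
  have hrange : {a : F | a ^ ℓ ∈ f.range}.ncard = Nat.gcd (ℓ * (q - 1)) (q ^ 2 - 1) + 1 := by
    simp only [f, mem_range_sub_id_iff_eq_neg hinv, hσ]
    exact ncard_setOf_pow_pow_eq_neg_pow hodd.pos.ne' hF hdvd
  simp only [← hf]
  rw [ncard_setOf_map_snd_eq f (· ^ ℓ), hker, hrange, mul_comm]

/-- For `q` an odd power of a prime `p` and `ℓ ≥ 1` with `gcd(p, ℓ) = 1` and
`2·gcd(ℓ, q+1) ∣ q+1`, the number of pairs `(a, b) ∈ F_{q^2} × F_{q^2}` with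
`b^q - b = a^ℓ` is exactly `q · (gcd(ℓ(q-1), q^2 - 1) + 1)`. -/
theorem stmt_14 (p q ℓ : ℕ) (hp : p.Prime) (hq : ∃ m : ℕ, 0 < m ∧ q = p ^ m)
    (hodd : Odd q) (hℓ : 0 < ℓ) (hcop : Nat.Coprime p ℓ)
    (hdvd : 2 * Nat.gcd ℓ (q + 1) ∣ q + 1)
    (F : Type*) [Field F] [Fintype F] (hF : Fintype.card F = q ^ 2) :
    Set.ncard {ab : F × F | ab.2 ^ q - ab.2 = ab.1 ^ ℓ} =
      q * (Nat.gcd (ℓ * (q - 1)) (q ^ 2 - 1) + 1) := by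
  exact stmt_14_general (Nat.card_eq_fintype_card.trans hF) hdvd
end

section
/- Let p be a prime, q a power of p, s and n positive integers with s dividing n, and ℓ a positive integer with gcd(p, ℓ) = 1. Let n_ℓ^s denote the cardinality of the cyclotomic coset {ℓ·q^{js} mod (q^n - 1) : j = 0, 1, 2, ...}, and assume p divides (n/s)/n_ℓ^s. Then the number of pairs (a, b) ∈ F_{q^n} × F_{q^n} satisfying b^{q^s} - b = a^ℓ is exactly q^{n+s}. -/
/-!
Put `Q = q ^ s` and `N = n / s`, so that `|F| = Q ^ N`. The exponents `ℓ * Q ^ j` modulo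
`|F| - 1` run through the cyclotomic coset periodically, with period its cardinality `d`; hence the
trace `∑ j < N, (a ^ ℓ) ^ Q ^ j` is `N / d` copies of a sum over one period, and vanishes as soon as
`p ∣ N / d`. If `c` has trace zero then applying the trace polynomial to `X ^ Q - X - c` yields
`X ^ |F| - X`, so `X ^ Q - X - c` divides this product of all the linear factors and has exactly
`Q` roots in `F`. Thus every `a` admits exactly `Q` values of `b`.
-/

open Finset Polynomial

theorem sum_range_mul_of_periodic {M : Type*} [AddCommMonoid M] {f : ℕ → M} {d : ℕ}
    (hf : Function.Periodic f d) (k : ℕ) :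
    ∑ j ∈ range (d * k), f j = k • ∑ j ∈ range d, f j := by
  induction k with
  | zero => simp
  | succ k ih =>
    have shift (j : ℕ) : f (d * k + j) = f j := by
      rw [add_comm, mul_comm]
      exact hf.nat_mul k j
    simp only [Nat.mul_succ, sum_range_add, ih, shift, succ_nsmul]

theorem ncard_range_iterate {α : Type*} {f : α → α} {x : α} (hx : x ∈ Function.periodicPts f) :
    (Set.range (f^[·] x)).ncard = Function.minimalPeriod f x := by
  have range_eq : Set.range (f^[·] x) = (f^[·] x) '' Set.Iio (Function.minimalPeriod f x) := by
    refine (Set.range_subset_iff.2 fun j ↦ ?_).antisymm (Set.image_subset_range _ _)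
    exact ⟨j % Function.minimalPeriod f x,
      Nat.mod_lt _ (Function.minimalPeriod_pos_of_mem_periodicPts hx),
      Function.iterate_mod_minimalPeriod_eq⟩
  rw [range_eq, Function.iterate_injOn_Iio_minimalPeriod.ncard_image, Set.ncard_Iio_nat]

section CyclotomicCoset

/-- The `Q`-cyclotomic coset of `ℓ` modulo `M`, as a set of remainders in `ℕ`. -/
def cyclotomicCoset (M Q ℓ : ℕ) : Set ℕ :=
  {x | ∃ j, x = ℓ * Q ^ j % M}

variable {M N Q : ℕ}

theorem iterate_mul_mod (M Q ℓ j : ℕ) : (· * Q % M)^[j] (ℓ % M) = ℓ * Q ^ j % M := by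
  induction j with
  | zero => simp
  | succ j ih => rw [Function.iterate_succ_apply', ih, Nat.mod_mul_mod, pow_succ, mul_assoc]

theorem isPeriodicPt_mul_mod (h : Q ^ N ≡ 1 [MOD M]) (ℓ : ℕ) :
    Function.IsPeriodicPt (· * Q % M) N (ℓ % M) := by
  have hmul : ℓ * Q ^ N ≡ ℓ [MOD M] := by simpa using h.mul_left ℓ
  exact (iterate_mul_mod M Q ℓ N).trans hmul

theorem ncard_cyclotomicCoset (hN : 0 < N) (h : Q ^ N ≡ 1 [MOD M]) (ℓ : ℕ) :
    (cyclotomicCoset M Q ℓ).ncard = Function.minimalPeriod (· * Q % M) (ℓ % M) := by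
  rw [← ncard_range_iterate ⟨N, hN, isPeriodicPt_mul_mod h ℓ⟩]
  congr 1
  ext x
  simp only [cyclotomicCoset, iterate_mul_mod, Set.mem_ofPred_eq, Set.mem_range, eq_comm]

theorem ncard_cyclotomicCoset_dvd (hN : 0 < N) (h : Q ^ N ≡ 1 [MOD M]) (ℓ : ℕ) :
    (cyclotomicCoset M Q ℓ).ncard ∣ N := by
  rw [ncard_cyclotomicCoset hN h]
  exact (isPeriodicPt_mul_mod h ℓ).minimalPeriod_dvd

theorem mul_pow_ncard_cyclotomicCoset_modEq (hN : 0 < N) (h : Q ^ N ≡ 1 [MOD M]) (ℓ : ℕ) :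
    ℓ * Q ^ (cyclotomicCoset M Q ℓ).ncard ≡ ℓ [MOD M] := by
  rw [ncard_cyclotomicCoset hN h, Nat.ModEq, ← iterate_mul_mod, Function.iterate_minimalPeriod]

end CyclotomicCoset

theorem sum_pow_pow_eq_zero_of_dvd {R : Type*} [Semiring R] (p : ℕ) [CharP R p]
    {x : R} {Q d k : ℕ} (hx : x ^ Q ^ d = x) (hk : p ∣ k) :
    ∑ j ∈ range (d * k), x ^ Q ^ j = 0 := by
  have hper : Function.Periodic (fun j ↦ x ^ Q ^ j) d := fun j ↦ by
    simp only [add_comm j, pow_add, pow_mul, hx]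
  rw [sum_range_mul_of_periodic hper, nsmul_eq_mul, (CharP.cast_eq_zero_iff R p k).2 hk, zero_mul]

theorem sum_pow_sub_self_pow {R : Type*} [CommRing R] (p : ℕ) [ExpChar R p] (r N : ℕ) (x : R) :
    ∑ j ∈ range N, (x ^ p ^ r - x) ^ (p ^ r) ^ j = x ^ (p ^ r) ^ N - x := by
  have summand (j : ℕ) :
      (x ^ p ^ r - x) ^ (p ^ r) ^ j = x ^ (p ^ r) ^ (j + 1) - x ^ (p ^ r) ^ j := by
    rw [← pow_mul p, sub_pow_expChar_pow, ← pow_mul x, pow_mul p, ← pow_succ']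
  simp only [summand, sum_range_sub (fun j ↦ x ^ (p ^ r) ^ j), pow_zero, pow_one]

theorem X_pow_sub_X_sub_C_dvd {R : Type*} [CommRing R] (p : ℕ) [ExpChar R p] {r N : ℕ} {c : R}
    (hc : ∑ j ∈ range N, c ^ (p ^ r) ^ j = 0) :
    (X ^ p ^ r - X - C c : R[X]) ∣ X ^ (p ^ r) ^ N - X := by
  have expand : ∑ j ∈ range N, (X ^ p ^ r - X - C c : R[X]) ^ (p ^ r) ^ j =
      X ^ (p ^ r) ^ N - X := by
    have summand (j : ℕ) : (X ^ p ^ r - X - C c : R[X]) ^ (p ^ r) ^ j =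
        (X ^ p ^ r - X) ^ (p ^ r) ^ j - C (c ^ (p ^ r) ^ j) := by
      rw [← pow_mul p, sub_pow_expChar_pow, C_pow]
    simp only [summand, sum_sub_distrib, sum_pow_sub_self_pow, ← map_sum, hc, map_zero, sub_zero]
  rw [← expand]
  refine dvd_sum fun j _ ↦ dvd_pow_self _ ?_
  exact pow_ne_zero _ (pow_ne_zero _ (expChar_ne_zero R p))

theorem natDegree_X_pow_sub_X_sub_C {R : Type*} [CommRing R] [Nontrivial R] {Q : ℕ} (hQ : 1 < Q)
    (c : R) : (X ^ Q - X - C c).natDegree = Q := by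
  rw [natDegree_sub_C, natDegree_sub_eq_left_of_natDegree_lt (by simpa), natDegree_X_pow]

section FiniteField

variable {F : Type*} [Field F] [Fintype F]

theorem ncard_setOf_isRoot_of_dvd_X_pow_card_sub_X {P : F[X]} (hP : P ∣ X ^ Fintype.card F - X) :
    {x | P.IsRoot x}.ncard = P.natDegree := by
  classical
  have hne := FiniteField.X_pow_card_sub_X_ne_zero F (Fintype.one_lt_card (α := F))
  have hsplits : P.Splits :=
    (by simpa using (FiniteField.isSplittingField_sub F F).splits :
      (X ^ Fintype.card F - X : F[X]).Splits).of_dvd hne hP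
  have hnodup : P.roots.Nodup := by
    refine Multiset.nodup_of_le (roots.le_of_dvd hne hP) ?_
    rw [FiniteField.roots_X_pow_card_sub_X]
    exact Finset.univ.nodup
  have hset : {x | P.IsRoot x} = P.roots.toFinset := by
    ext x
    simp [ne_zero_of_dvd_ne_zero hne hP]
  rw [hset, Set.ncard_coe_finset, Multiset.toFinset_card_of_nodup hnodup,
    hsplits.natDegree_eq_card_roots]

theorem ne_zero_and_one_lt_of_card_eq_pow {Q N : ℕ} (hF : Fintype.card F = Q ^ N) :
    N ≠ 0 ∧ 1 < Q := by
  have hcard : 1 < Q ^ N := hF ▸ Fintype.one_lt_card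
  have hN : N ≠ 0 := by
    rintro rfl
    simp at hcard
  exact ⟨hN, (Nat.one_lt_pow_iff hN).1 hcard⟩

theorem ncard_pow_sub_self_eq {Q N : ℕ} (hF : Fintype.card F = Q ^ N) {c : F}
    (hc : ∑ j ∈ range N, c ^ Q ^ j = 0) : {b : F | b ^ Q - b = c}.ncard = Q := by
  obtain ⟨hN, hQ⟩ := ne_zero_and_one_lt_of_card_eq_pow hF
  obtain ⟨p, _⟩ := CharP.exists F
  obtain ⟨m, hp, hm⟩ := FiniteField.card F p
  have : Fact p.Prime := ⟨hp⟩
  obtain ⟨r, -, rfl⟩ := (Nat.dvd_prime_pow hp).1 (hm ▸ hF ▸ dvd_pow_self Q hN)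
  have hdvd : (X ^ p ^ r - X - C c : F[X]) ∣ X ^ Fintype.card F - X :=
    hF ▸ X_pow_sub_X_sub_C_dvd p hc
  simpa [natDegree_X_pow_sub_X_sub_C hQ, sub_eq_zero] using
    ncard_setOf_isRoot_of_dvd_X_pow_card_sub_X hdvd

theorem pow_pow_eq_of_mul_modEq {ℓ m : ℕ} (hm : m ≠ 0) (h : ℓ * m ≡ ℓ [MOD Fintype.card F - 1])
    (a : F) : (a ^ ℓ) ^ m = a ^ ℓ := by
  rw [← pow_mul]
  obtain rfl | ha := eq_or_ne a 0
  · simp [zero_pow_eq, hm]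
  · exact pow_eq_pow_of_modEq h (FiniteField.pow_card_sub_one_eq_one a ha)

theorem sum_pow_pow_eq_zero_of_dvd_div_ncard_cyclotomicCoset (p : ℕ) [CharP F p] {Q N ℓ : ℕ}
    (hF : Fintype.card F = Q ^ N) (hdvd : p ∣ N / (cyclotomicCoset (Q ^ N - 1) Q ℓ).ncard)
    (a : F) : ∑ j ∈ range N, (a ^ ℓ) ^ Q ^ j = 0 := by
  obtain ⟨hN, hQ⟩ := ne_zero_and_one_lt_of_card_eq_pow hF
  have hmod : Q ^ N ≡ 1 [MOD Q ^ N - 1] := Nat.modEq_sub (Nat.one_le_pow _ _ (by lia))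
  have hperiod := mul_pow_ncard_cyclotomicCoset_modEq hN.bot_lt hmod ℓ
  rw [← Nat.mul_div_cancel' (ncard_cyclotomicCoset_dvd hN.bot_lt hmod ℓ)]
  exact sum_pow_pow_eq_zero_of_dvd p
    (pow_pow_eq_of_mul_modEq (pow_ne_zero _ (by lia)) (hF ▸ hperiod) a) hdvd

end FiniteField

theorem ncard_setOf_prod_of_ncard_fiber {α β : Type*} [Finite α] [Finite β] {r : α → β → Prop}
    {k : ℕ} (h : ∀ a, {b | r a b}.ncard = k) :
    {x : α × β | r x.1 x.2}.ncard = Nat.card α * k := by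
  cases nonempty_fintype α
  have hcard (a : α) : Nat.card {b // r a b} = k := h a
  change Nat.card {x : α × β // r x.1 x.2} = _
  rw [Nat.card_congr (Equiv.subtypeProdEquivSigmaSubtype r), Nat.card_sigma]
  simp [hcard]

theorem stmt_16_general (p q s n ℓ : ℕ) (hsn : s ∣ n)
    (F : Type*) [Field F] [Fintype F] [CharP F p] (hF : Fintype.card F = q ^ n)
    (hdvd : p ∣ n / s / (cyclotomicCoset (q ^ n - 1) (q ^ s) ℓ).ncard) :
    Set.ncard {ab : F × F | ab.2 ^ q ^ s - ab.2 = ab.1 ^ ℓ} = q ^ (n + s) := by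
  obtain ⟨N, rfl⟩ := hsn
  have hs : 0 < s := Nat.pos_of_ne_zero <|
    left_ne_zero_of_mul (ne_zero_and_one_lt_of_card_eq_pow hF).1
  rw [Nat.mul_div_cancel_left _ hs, pow_mul] at hdvd
  rw [pow_mul] at hF
  have htrace := sum_pow_pow_eq_zero_of_dvd_div_ncard_cyclotomicCoset p hF hdvd
  rw [ncard_setOf_prod_of_ncard_fiber fun a ↦ ncard_pow_sub_self_eq hF (htrace a),
    Nat.card_eq_fintype_card, hF, pow_add, pow_mul]

/-- Let `s ∣ n`, `gcd(p, ℓ) = 1`, and let `nℓs` be the cardinality of the cyclotomic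
coset `{ℓ·q^{js} mod (q^n - 1) : j = 0, 1, 2, …}`. If `p` divides `(n/s) / nℓs`, then
the number of pairs `(a, b) ∈ F_{q^n} × F_{q^n}` with `b^{q^s} - b = a^ℓ` is exactly
`q^{n+s}`. -/
theorem stmt_16 (p q s n ℓ nℓs : ℕ) (hp : p.Prime) (hq : ∃ m : ℕ, 0 < m ∧ q = p ^ m)
    (hs : 0 < s) (hn : 0 < n) (hℓ : 0 < ℓ) (hsn : s ∣ n) (hcop : Nat.Coprime p ℓ)
    (hnℓs : nℓs = Set.ncard {x : ℕ | ∃ j : ℕ, x = (ℓ * q ^ (j * s)) % (q ^ n - 1)})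
    (hdvd : p ∣ (n / s) / nℓs)
    (F : Type*) [Field F] [Fintype F] (hF : Fintype.card F = q ^ n) :
    Set.ncard {ab : F × F | ab.2 ^ q ^ s - ab.2 = ab.1 ^ ℓ} = q ^ (n + s) := by
  have hcoset : nℓs = (cyclotomicCoset (q ^ n - 1) (q ^ s) ℓ).ncard := by
    simpa only [cyclotomicCoset, ← pow_mul, mul_comm s] using hnℓs
  obtain ⟨m, -, rfl⟩ := hq
  have : Fact p.Prime := ⟨hp⟩
  have : CharP F p := charP_of_card_eq_prime_pow (hF.trans (pow_mul p m n).symm)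
  exact stmt_16_general p (p ^ m) s n ℓ hsn F hF (hcoset ▸ hdvd)
end
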